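/- arXiv:1706.09134 — 2 statements merged into one kernel-verified Lean document; each statement's English description precedes it below -/
import Mathlib

section
/- The rational function 1/(xy) ∈ k(x,y) is not exact with respect to (Δ_x, D_y): there do not exist g, h ∈ k(x,y) with 1/(xy) = Δ_x(g) + D_y(h). In particular, there is no g ∈ k(x,y) with 1/x = Δ_x(g). -/
/-!
Taking the coefficient of `y⁻¹` in the expansion at `y = ∞`, and then that of `x⁻¹` in the
expansion at `x = ∞`, gives an additive map `k(x,y) → k` that sends `1/(xy)` to `1`. It vanishes on
every `Δ_x(g) + D_y(h)`. Indeed a derivative has no `y⁻¹` term; and `σ_x`, which acts on the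
coefficient of `y⁻¹` by the shift of `k(x)`, does not change the coefficient of `x⁻¹`: if the
denominator is monic of degree `n`, that is the coefficient of degree `n - 1` in the remainder of
the numerator, and translation preserves division with remainder and this top coefficient.

A solution of `1/x = Δ_x(g)` would give `1/(xy) = Δ_x(g/y)`.
-/

open Polynomial

noncomputable section

variable (k : Type*) [Field k] [CharZero k]

/-- `k(x,y)` realized as `k(x)(y)`: rational functions in `y` over `k(x) = RatFunc k`. -/
abbrev F2 := RatFunc (RatFunc k)

/-- The element `x` of `k(x,y)`. -/
def Fx : F2 k := RatFunc.C RatFunc.X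

/-- The element `y` of `k(x,y)`. -/
def Fy : F2 k := RatFunc.X

/-- The embedding of the constants `k` into `k(x,y)`. -/
def Fc : k →+* F2 k := RatFunc.C.comp RatFunc.C

/-- The embedding of `k(x)` into `k(x,y)`. -/
def FKx : RatFunc k →+* F2 k := RatFunc.C

/-- The embedding of `k(x)[y]` into `k(x,y)`. -/
def FP : Polynomial (RatFunc k) →+* F2 k := algebraMap _ _

/-- The embedding of `k[x,y]` (realized as `(k[x])[y]`, outer variable `y`) into `k(x)[y]`. -/
def PP : Polynomial (Polynomial k) →+* Polynomial (RatFunc k) :=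
  Polynomial.mapRingHom (algebraMap (Polynomial k) (RatFunc k))

/-- The embedding of `k[y]` into `k[x,y] = (k[x])[y]`. -/
def PY : Polynomial k →+* Polynomial (Polynomial k) :=
  Polynomial.mapRingHom Polynomial.C

/-- The embedding of `k[x,y]` into `k(x,y)`. -/
def FPP : Polynomial (Polynomial k) →+* F2 k := (FP k).comp (PP k)

/-- The embedding of `k[y]` into `k(x)[y]`. -/
def PYx : Polynomial k →+* Polynomial (RatFunc k) :=
  Polynomial.mapRingHom (algebraMap k (RatFunc k))

variable {k}

/-- `σ` is the shift operator `σ_x : f(x,y) ↦ f(x+1,y)`, i.e. the automorphism of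
`k(x,y)` fixing `k(y)` pointwise (equivalently, fixing the generators `k` and `y`)
and sending `x` to `x+1`. -/
def IsShiftX (σ : F2 k ≃+* F2 k) : Prop :=
  (∀ c : k, σ (Fc k c) = Fc k c) ∧ σ (Fy k) = Fy k ∧ σ (Fx k) = Fx k + 1

/-- `σ` is the `q`-shift operator `τ_{x,q} : f(x,y) ↦ f(qx,y)`, i.e. the automorphism of
`k(x,y)` fixing `k(y)` pointwise and sending `x` to `q·x`. -/
def IsQShiftX (q : k) (σ : F2 k ≃+* F2 k) : Prop :=
  (∀ c : k, σ (Fc k c) = Fc k c) ∧ σ (Fy k) = Fy k ∧ σ (Fx k) = Fc k q * Fx k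

/-- `σ` is the shift operator `σ_y : f(x,y) ↦ f(x,y+1)`, i.e. the automorphism of
`k(x,y)` fixing `k(x)` pointwise and sending `y` to `y+1`. -/
def IsShiftY (σ : F2 k ≃+* F2 k) : Prop :=
  (∀ c : k, σ (Fc k c) = Fc k c) ∧ σ (Fx k) = Fx k ∧ σ (Fy k) = Fy k + 1

/-- `D` is the partial derivation `D_y = ∂/∂y` on `k(x,y)`: the `k(x)`-linear derivation
with `D(y) = 1`. -/
def IsDerivY (D : F2 k → F2 k) : Prop :=
  (∀ a b, D (a + b) = D a + D b) ∧ (∀ a b, D (a * b) = a * D b + D a * b) ∧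
  (∀ c : RatFunc k, D (FKx k c) = 0) ∧ D (Fy k) = 1

/-- `q` is not a root of unity. -/
def NotRootOfUnity (q : k) : Prop := ∀ n : ℕ, 0 < n → q ^ n ≠ 1

section CommRing

variable {R : Type*} [CommRing R] {q : R[X]}

theorem natDegree_modByMonic_le_sub_one (p : R[X]) (hq : q.Monic) :
    (p %ₘ q).natDegree ≤ q.natDegree - 1 := by
  rcases eq_or_ne q 1 with rfl | hq₁
  · simp
  · exact Nat.le_sub_one_of_lt (natDegree_modByMonic_lt p hq hq₁)

theorem mul_modByMonic_mul_right (p : R[X]) {a : R[X]} (hq : q.Monic) (ha : a.Monic) :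
    (p * a) %ₘ (q * a) = (p %ₘ q) * a := by
  nontriviality R
  refine (div_modByMonic_unique (p /ₘ q) _ (hq.mul ha) ⟨?_, ?_⟩).2
  · linear_combination a * modByMonic_add_div p q
  · rw [ha.degree_mul, ha.degree_mul]
    exact WithBot.add_lt_add_right (degree_ne_bot.2 ha.ne_zero) (degree_modByMonic_lt p hq)

theorem coeff_mul_modByMonic_mul_right (p : R[X]) {a : R[X]} (hq : q.Monic) (ha : a.Monic) :
    ((p * a) %ₘ (q * a)).coeff ((q * a).natDegree - 1) = (p %ₘ q).coeff (q.natDegree - 1) := by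
  rw [mul_modByMonic_mul_right p hq ha, hq.natDegree_mul ha]
  rcases Nat.eq_zero_or_pos q.natDegree with h₀ | hpos
  · simp [hq.natDegree_eq_zero.1 h₀]
  · rw [Nat.sub_add_comm hpos,
      coeff_mul_add_eq_of_natDegree_le (natDegree_modByMonic_le_sub_one p hq) le_rfl,
      ha.coeff_natDegree, mul_one]

theorem monic_taylor (r : R) (hq : q.Monic) : (taylor r q).Monic :=
  (leadingCoeff_taylor r q).trans hq

theorem taylor_modByMonic (r : R) (p : R[X]) (hq : q.Monic) :
    taylor r (p %ₘ q) = taylor r p %ₘ taylor r q := by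
  nontriviality R
  refine (div_modByMonic_unique (taylor r (p /ₘ q)) _ (monic_taylor r hq) ⟨?_, ?_⟩).2.symm
  · rw [← taylor_mul, ← map_add, modByMonic_add_div]
  · simpa only [degree_taylor] using degree_modByMonic_lt p hq

theorem coeff_taylor_of_natDegree_le (r : R) {p : R[X]} {n : ℕ} (hn : p.natDegree ≤ n) :
    (taylor r p).coeff n = p.coeff n := by
  rcases hn.eq_or_lt with rfl | hlt
  · exact coeff_taylor_natDegree r p
  · rw [coeff_eq_zero_of_natDegree_lt hlt,
      coeff_eq_zero_of_natDegree_lt ((natDegree_taylor p r).trans_lt hlt)]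

theorem natDegree_wronskian_modByMonic_lt {p : R[X]} (hq : q.Monic)
    (hne : q.wronskian (p %ₘ q) ≠ 0) :
    (q.wronskian (p %ₘ q)).natDegree < (q ^ 2).natDegree - 1 := by
  have hlt := natDegree_wronskian_lt_add hne
  have hle := natDegree_modByMonic_le_sub_one p hq
  have hpos : q.natDegree ≠ 0 := fun h₀ => by
    simp [hq.natDegree_eq_zero.1 h₀] at hne
  rw [hq.natDegree_pow]
  lia

theorem wronskian_modByMonic_sq (p : R[X]) (hq : q.Monic) :
    q.wronskian p %ₘ q ^ 2 = q.wronskian (p %ₘ q) := by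
  nontriviality R
  refine (div_modByMonic_unique (p /ₘ q).derivative _ (hq.pow 2) ⟨?_, ?_⟩).2
  · conv_rhs => rw [← modByMonic_add_div p q]
    simp only [wronskian, map_add, derivative_mul]
    ring
  · rcases eq_or_ne (q.wronskian (p %ₘ q)) 0 with h₀ | hne
    · simpa [h₀, bot_lt_iff_ne_bot] using (hq.pow 2).ne_zero
    · have := natDegree_wronskian_modByMonic_lt hq hne
      exact degree_lt_degree (this.trans_le (Nat.sub_le _ _))

theorem coeff_wronskian_modByMonic_sq (p : R[X]) (hq : q.Monic) :
    (q.wronskian p %ₘ q ^ 2).coeff ((q ^ 2).natDegree - 1) = 0 := by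
  rw [wronskian_modByMonic_sq p hq]
  by_contra hne
  have hw : q.wronskian (p %ₘ q) ≠ 0 := fun h₀ => hne (by rw [h₀, coeff_zero])
  exact hne (coeff_eq_zero_of_natDegree_lt (natDegree_wronskian_modByMonic_lt hq hw))

end CommRing

section RatFuncTaylor

variable {R : Type*} [CommRing R] [IsDomain R]

/-- The shift `f(X) ↦ f(X + r)` on rational functions, extending `Polynomial.taylor`. -/
def ratFuncTaylor (r : R) : RatFunc R →+* RatFunc R :=
  IsFractionRing.map (j := (taylorAlgHom r : R[X] →+* R[X])) (taylor_injective r)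

theorem ratFuncTaylor_algebraMap (r : R) (p : R[X]) :
    ratFuncTaylor r (algebraMap R[X] (RatFunc R) p) =
      algebraMap R[X] (RatFunc R) (taylor r p) := by
  simp [ratFuncTaylor, IsFractionRing.map]

theorem ratFuncTaylor_C (r c : R) : ratFuncTaylor r (RatFunc.C c) = RatFunc.C c := by
  rw [← RatFunc.algebraMap_C, ratFuncTaylor_algebraMap, taylor_C]

theorem ratFuncTaylor_X (r : R) : ratFuncTaylor r RatFunc.X = RatFunc.X + RatFunc.C r := by
  rw [← RatFunc.algebraMap_X, ratFuncTaylor_algebraMap, taylor_X, map_add, RatFunc.algebraMap_C]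

theorem ratFunc_ringHom_ext {A : Type*} [Semiring A] {σ τ : RatFunc R →+* A}
    (hC : ∀ c, σ (RatFunc.C c) = τ (RatFunc.C c)) (hX : σ RatFunc.X = τ RatFunc.X) : σ = τ :=
  IsLocalization.ringHom_ext (nonZeroDivisors R[X])
    (Polynomial.ringHom_ext (fun c => by simpa using hC c) (by simpa using hX))

end RatFuncTaylor

section CoeffInvX

variable {K L : Type*} [Field K] [Field L]

/-- The coefficient of `X⁻¹` in the expansion of a rational function in powers of `X⁻¹`, that is,
minus its residue at infinity. If `t` is the remainder of the numerator modulo the denominator, of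
degree `n`, it is the coefficient of `X ^ (n - 1)` in `t`; for `n = 0` the subtraction truncates,
but then `t = 0`. -/
def coeffInvX (f : RatFunc K) : K :=
  (f.num %ₘ f.denom).coeff (f.denom.natDegree - 1)

theorem coeffInvX_div (p : K[X]) {q : K[X]} (hq : q.Monic) :
    coeffInvX (algebraMap K[X] (RatFunc K) p / algebraMap K[X] (RatFunc K) q) =
      (p %ₘ q).coeff (q.natDegree - 1) := by
  set f := algebraMap K[X] (RatFunc K) p / algebraMap K[X] (RatFunc K) q with hf
  have hcross : f.num * q = p * f.denom := RatFunc.num_mul_eq_mul_denom_iff hq.ne_zero |>.2 hf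
  rw [coeffInvX, ← coeff_mul_modByMonic_mul_right f.num f.monic_denom hq, hcross, mul_comm f.denom,
    coeff_mul_modByMonic_mul_right p hq f.monic_denom]

theorem coeffInvX_add (f g : RatFunc K) : coeffInvX (f + g) = coeffInvX f + coeffInvX g := by
  have hf := f.monic_denom
  have hg := g.monic_denom
  have hsum : f + g = algebraMap K[X] (RatFunc K) (f.num * g.denom + g.num * f.denom) /
      algebraMap K[X] (RatFunc K) (f.denom * g.denom) := by
    have hf₀ := RatFunc.algebraMap_ne_zero hf.ne_zero
    have hg₀ := RatFunc.algebraMap_ne_zero hg.ne_zero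
    conv_lhs => rw [← f.num_div_denom, ← g.num_div_denom, div_add_div _ _ hf₀ hg₀]
    simp only [map_add, map_mul, mul_comm]
  rw [hsum, coeffInvX_div _ (hf.mul hg), add_modByMonic, coeff_add,
    coeff_mul_modByMonic_mul_right _ hf hg, mul_comm f.denom,
    coeff_mul_modByMonic_mul_right _ hg hf, coeffInvX, coeffInvX]

theorem coeffInvX_C_mul_inv_X (c : K) : coeffInvX (RatFunc.C c * RatFunc.X⁻¹) = c := by
  rw [← div_eq_mul_inv, ← RatFunc.algebraMap_C, ← RatFunc.algebraMap_X, coeffInvX_div _ monic_X,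
    modByMonic_X]
  simp

theorem ratFunc_derivation_algebraMap {D : Derivation K (RatFunc K) (RatFunc K)}
    (hX : D RatFunc.X = 1) (p : K[X]) :
    D (algebraMap K[X] (RatFunc K) p) = algebraMap K[X] (RatFunc K) p.derivative := by
  have h := D.map_aeval p RatFunc.X
  rw [hX] at h
  simpa [← RatFunc.algebraMap_X, aeval_algebraMap_apply] using h

theorem ratFunc_derivation_div {D : Derivation K (RatFunc K) (RatFunc K)} (hX : D RatFunc.X = 1)
    (p q : K[X]) :
    D (algebraMap K[X] (RatFunc K) p / algebraMap K[X] (RatFunc K) q) =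
      algebraMap K[X] (RatFunc K) (q.wronskian p) / algebraMap K[X] (RatFunc K) (q ^ 2) := by
  rw [D.leibniz_div, ratFunc_derivation_algebraMap hX, ratFunc_derivation_algebraMap hX,
    wronskian]
  simp only [smul_eq_mul, map_sub, map_mul, map_pow]
  ring

theorem coeffInvX_derivation {D : Derivation K (RatFunc K) (RatFunc K)} (hX : D RatFunc.X = 1)
    (f : RatFunc K) : coeffInvX (D f) = 0 := by
  conv_lhs => rw [← f.num_div_denom, ratFunc_derivation_div hX]
  rw [coeffInvX_div _ (f.monic_denom.pow 2), coeff_wronskian_modByMonic_sq _ f.monic_denom]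

theorem ratFunc_ringHom_algebraMap {σ : RatFunc K →+* RatFunc L} {s : K →+* L} {r : L}
    (hC : ∀ c, σ (RatFunc.C c) = RatFunc.C (s c)) (hX : σ RatFunc.X = RatFunc.X + RatFunc.C r)
    (p : K[X]) :
    σ (algebraMap K[X] (RatFunc K) p) = algebraMap L[X] (RatFunc L) (taylor r (p.map s)) := by
  induction p using Polynomial.induction_on' with
  | add p q hp hq => simp only [Polynomial.map_add, map_add, hp, hq]
  | monomial n a => simp [← C_mul_X_pow_eq_monomial, hC, hX]

theorem coeffInvX_ringHom {σ : RatFunc K →+* RatFunc L} {s : K →+* L} {r : L}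
    (hC : ∀ c, σ (RatFunc.C c) = RatFunc.C (s c)) (hX : σ RatFunc.X = RatFunc.X + RatFunc.C r)
    (f : RatFunc K) : coeffInvX (σ f) = s (coeffInvX f) := by
  have hq := f.monic_denom
  have hle := natDegree_modByMonic_le_sub_one (f.num.map s) (hq.map s)
  conv_lhs => rw [← f.num_div_denom, map_div₀, ratFunc_ringHom_algebraMap hC hX,
    ratFunc_ringHom_algebraMap hC hX]
  rw [coeffInvX_div _ (monic_taylor r (hq.map s)), natDegree_taylor,
    ← taylor_modByMonic r _ (hq.map s), coeff_taylor_of_natDegree_le r hle,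
    ← map_modByMonic s hq, coeff_map, natDegree_map, coeffInvX]

end CoeffInvX

section Bivariate

variable {K : Type*} [Field K]

theorem IsShiftX.apply_C {σ : F2 K ≃+* F2 K} (hσ : IsShiftX σ) (c : RatFunc K) :
    σ (RatFunc.C c) = RatFunc.C (ratFuncTaylor 1 c) := by
  obtain ⟨hconst, -, hx⟩ := hσ
  have hcomp : (σ : F2 K →+* F2 K).comp RatFunc.C =
      (RatFunc.C : RatFunc K →+* F2 K).comp (ratFuncTaylor 1) := by
    refine ratFunc_ringHom_ext (fun a => ?_) ?_
    · simpa [ratFuncTaylor_C, Fc] using hconst a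
    · simpa [ratFuncTaylor_X, Fx] using hx
  exact RingHom.congr_fun hcomp c

/-- A map satisfying `IsDerivY`, bundled as a `k(x)`-linear derivation of `k(x,y)`, to which
the general rules for derivations apply. -/
def IsDerivY.toDerivation {D : F2 K → F2 K} (hD : IsDerivY D) :
    Derivation (RatFunc K) (F2 K) (F2 K) :=
  have hconst (c : RatFunc K) : D (RatFunc.C c) = 0 := hD.2.2.1 c
  Derivation.mk'
    { toFun := D
      map_add' := hD.1
      map_smul' := fun c f => by simp [RatFunc.smul_eq_C_mul, hD.2.1, hconst] }
    fun f g => by simp [hD.2.1, mul_comm]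

/-- The coefficient of `x⁻¹` in the coefficient of `y⁻¹` of an element of `k(x,y)`, both expansions
being taken at infinity: the iterated residue at `y = ∞` and then at `x = ∞`. It is the functional
that separates `1/(xy)` from the exact functions. -/
def iteratedCoeffInvX : F2 K →+ K :=
  (AddMonoidHom.mk' coeffInvX coeffInvX_add).comp (AddMonoidHom.mk' coeffInvX coeffInvX_add)

theorem iteratedCoeffInvX_apply (f : F2 K) : iteratedCoeffInvX f = coeffInvX (coeffInvX f) :=
  rfl

theorem IsShiftX.iteratedCoeffInvX_eq {σ : F2 K ≃+* F2 K} (hσ : IsShiftX σ) (f : F2 K) :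
    iteratedCoeffInvX (σ f) = iteratedCoeffInvX f := by
  have hy : (σ : F2 K →+* F2 K) RatFunc.X = RatFunc.X + RatFunc.C 0 := by
    simpa [Fy] using hσ.2.1
  have hinner : coeffInvX (σ f) = ratFuncTaylor 1 (coeffInvX f) :=
    coeffInvX_ringHom hσ.apply_C hy f
  have houter (r : RatFunc K) : coeffInvX (ratFuncTaylor 1 r) = coeffInvX r :=
    coeffInvX_ringHom (s := RingHom.id K) (ratFuncTaylor_C 1) (ratFuncTaylor_X 1) r
  rw [iteratedCoeffInvX_apply, iteratedCoeffInvX_apply, hinner, houter]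

theorem IsDerivY.iteratedCoeffInvX_eq_zero {D : F2 K → F2 K} (hD : IsDerivY D) (f : F2 K) :
    iteratedCoeffInvX (D f) = 0 := by
  have hinner : coeffInvX (D f) = 0 := coeffInvX_derivation (D := hD.toDerivation) hD.2.2.2 f
  have houter : coeffInvX (0 : RatFunc K) = 0 :=
    map_zero (AddMonoidHom.mk' coeffInvX coeffInvX_add)
  rw [iteratedCoeffInvX_apply, hinner, houter]

theorem iteratedCoeffInvX_inv_Fx_mul_Fy : iteratedCoeffInvX (Fx K * Fy K)⁻¹ = 1 := by
  have hinner : coeffInvX (Fx K * Fy K)⁻¹ = RatFunc.X⁻¹ := by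
    rw [Fx, Fy, mul_inv, ← map_inv₀, coeffInvX_C_mul_inv_X]
  have houter : coeffInvX (RatFunc.X⁻¹ : RatFunc K) = 1 := by
    simpa only [map_one, one_mul] using coeffInvX_C_mul_inv_X (1 : K)
  rw [iteratedCoeffInvX_apply, hinner, houter]

end Bivariate

theorem stmt18_general {k : Type*} [Field k]
    (σx : F2 k ≃+* F2 k) (hσx : IsShiftX σx)
    (Dy : F2 k → F2 k) (hDy : IsDerivY Dy) :
    (¬ ∃ g h : F2 k, (Fx k * Fy k)⁻¹ = (σx g - g) + Dy h) ∧
    (¬ ∃ g : F2 k, (Fx k)⁻¹ = σx g - g) := by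
  have hxy : ¬ ∃ g h : F2 k, (Fx k * Fy k)⁻¹ = (σx g - g) + Dy h := by
    rintro ⟨g, h, heq⟩
    refine one_ne_zero (α := k) ?_
    calc
      1 = iteratedCoeffInvX (Fx k * Fy k)⁻¹ := iteratedCoeffInvX_inv_Fx_mul_Fy.symm
      _ = 0 := by
        rw [heq, map_add, map_sub, hσx.iteratedCoeffInvX_eq, hDy.iteratedCoeffInvX_eq_zero,
          sub_self, add_zero]
  refine ⟨hxy, fun ⟨g, heq⟩ => hxy ⟨g * (Fy k)⁻¹, 0, ?_⟩⟩
  have hD₀ : Dy 0 = 0 := map_zero hDy.toDerivation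
  rw [hD₀, add_zero, map_mul, map_inv₀, hσx.2.1, mul_inv, heq, sub_mul]

/-- Example 1, second part: the rational function `1/(xy)` is not exact
with respect to `(Δ_x, D_y)`: there are no `g, h ∈ k(x,y)` with
`1/(xy) = Δ_x(g) + D_y(h)`; in particular, there is no `g ∈ k(x,y)` with
`1/x = Δ_x(g)`. -/
theorem stmt18 {k : Type*} [Field k] [CharZero k]
    (σx : F2 k ≃+* F2 k) (hσx : IsShiftX σx)
    (Dy : F2 k → F2 k) (hDy : IsDerivY Dy) :
    (¬ ∃ g h : F2 k, (Fx k * Fy k)⁻¹ = (σx g - g) + Dy h) ∧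
    (¬ ∃ g : F2 k, (Fx k)⁻¹ = σx g - g) :=
  stmt18_general σx hσx Dy hDy
end
end

section
/- Let q ∈ k \ {0}, q ≠ 1. Then in k(x,y) the identity 1/(xy) = Δ_{x,q}( q/((1−q)·x·y) ) holds; in particular 1/(xy) is exact with respect to (Δ_{x,q}, Δ_y). By contrast, if q is not a root of unity, the rational function 1/(x+y) is not exact with respect to (Δ_{x,q}, Δ_y). -/
/-!
The identity for `1/(xy)` is a direct computation. The obstruction to the exactness of `1/(x+y)` is
the total residue of a rational function in one variable, that is, the coefficient of `y⁻¹` in its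
expansion at infinity, which behaves under affine substitutions like the differential `dy`.
In the variable `y` it is invariant under `y ↦ y + 1` and commutes with the action of `τ_{x,q}` on
the coefficients; since `1/(x+y)` has total residue `1`, exactness would give an `a ∈ k(x)` with
`a(qx) - a(x) = 1`. Dividing this equation by `x` and taking total residues in the variable `x`
excludes such an `a`: those of `a(qx)/x` and of `a(x)/x` agree, whereas that of `1/x` is `1`.
-/

open Polynomial

noncomputable section

variable (k : Type*) [Field k] [CharZero k]

variable {k}

/-! ### Composition and remainder of polynomials -/

section NoZeroDivisors

variable {R : Type*} [Semiring R] [NoZeroDivisors R]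

theorem comp_ne_zero {p s : R[X]} (hp : p ≠ 0) (hs : s.natDegree ≠ 0) : p.comp s ≠ 0 := by
  rw [← leadingCoeff_ne_zero, leadingCoeff_comp hs]
  exact mul_ne_zero (leadingCoeff_ne_zero.2 hp)
    (pow_ne_zero _ (leadingCoeff_ne_zero.2 (ne_zero_of_natDegree_gt hs.bot_lt)))

theorem natDegree_comp_C_mul_X_add_C (p : R[X]) {a : R} (ha : a ≠ 0) (b : R) :
    (p.comp (C a * X + C b)).natDegree = p.natDegree := by
  rw [natDegree_comp, natDegree_linear ha, mul_one]

theorem coeff_comp_C_mul_X_add_C {p : R[X]} {n : ℕ} (hp : p.natDegree ≤ n) {a : R} (ha : a ≠ 0)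
    (b : R) : (p.comp (C a * X + C b)).coeff n = p.coeff n * a ^ n := by
  have hdeg := natDegree_comp_C_mul_X_add_C p ha b
  rcases hp.lt_or_eq with h | rfl
  · rw [coeff_eq_zero_of_natDegree_lt h, coeff_eq_zero_of_natDegree_lt (hdeg.trans_lt h), zero_mul]
  · rw [← hdeg, coeff_natDegree, leadingCoeff_comp (by simp [natDegree_linear ha]),
      leadingCoeff_linear ha, hdeg, coeff_natDegree]

theorem coeff_mul_natDegree_sub_one {r d e : R[X]} (hr : r.degree < d.degree) (he : e ≠ 0) :
    (r * e).coeff ((d * e).natDegree - 1) = r.coeff (d.natDegree - 1) * e.leadingCoeff := by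
  have hd : d ≠ 0 := ne_zero_of_degree_gt hr
  rcases eq_or_ne r 0 with rfl | hr0
  · simp only [zero_mul, coeff_zero]
  have hlt : r.natDegree < d.natDegree := natDegree_lt_natDegree hr0 hr
  have hindex : (d * e).natDegree - 1 = (d.natDegree - 1) + e.natDegree := by
    rw [natDegree_mul hd he]
    omega
  rw [hindex, coeff_mul_add_eq_of_natDegree_le (Nat.le_sub_one_of_lt hlt) le_rfl, leadingCoeff]

end NoZeroDivisors

section Mod

theorem dvd_sub_mod {R : Type*} [EuclideanDomain R] (a b : R) : b ∣ a - a % b :=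
  ⟨a / b, by rw [sub_eq_iff_eq_add, EuclideanDomain.div_add_mod]⟩

variable {K : Type*} [Field K]

theorem mod_eq_of_dvd_sub_of_degree_lt {p d r : K[X]} (hdvd : d ∣ p - r)
    (hr : r.degree < d.degree) : p % d = r := by
  have hd : d ≠ 0 := ne_zero_of_degree_gt hr
  rw [mod_eq_of_dvd_sub hdvd, (mod_eq_self_iff hd).2 hr]

theorem mul_mod_mul_right (p : K[X]) {d e : K[X]} (hd : d ≠ 0) (he : e ≠ 0) :
    p * e % (d * e) = p % d * e := by
  apply mod_eq_of_dvd_sub_of_degree_lt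
  · simpa only [sub_mul] using mul_dvd_mul_right (dvd_sub_mod p d) e
  · rw [degree_mul, degree_mul]
    exact WithBot.add_lt_add_right (degree_ne_bot.2 he) (degree_mod_lt p hd)

theorem C_mul_mod (c : K) (p d : K[X]) : C c * p % d = C c * (p % d) := by
  simp only [mod_def, ← smul_eq_C_mul, smul_modByMonic]

theorem comp_mod_comp (p : K[X]) {d s : K[X]} (hd : d ≠ 0) (hs : s.natDegree ≠ 0) :
    p.comp s % d.comp s = (p % d).comp s := by
  apply mod_eq_of_dvd_sub_of_degree_lt
  · simpa only [coe_compRingHom_apply, map_sub] using map_dvd (compRingHom s) (dvd_sub_mod p d)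
  · rcases eq_or_ne (p % d) 0 with h0 | h0
    · simpa only [h0, zero_comp, degree_zero, bot_lt_iff_ne_bot, degree_ne_bot] using
        comp_ne_zero hd hs
    · apply degree_lt_degree
      rw [natDegree_comp, natDegree_comp]
      exact Nat.mul_lt_mul_of_pos_right (natDegree_lt_natDegree h0 (degree_mod_lt p hd)) hs.bot_lt

end Mod

/-! ### Total residues -/

section TotalResidue

variable {K L : Type*} [Field K] [Field L]

/-- The sum of the residues of the fraction `p / d` at its finite poles, read off from its
expansion at infinity as the coefficient of `X⁻¹`. When `d` is constant, the index
`d.natDegree - 1` truncates to `0`, which is harmless because `p % d = 0`. -/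
def fracResidue (p d : K[X]) : K := (p % d).coeff (d.natDegree - 1) / d.leadingCoeff

theorem fracResidue_mul_mul_right (p : K[X]) {d e : K[X]} (hd : d ≠ 0) (he : e ≠ 0) :
    fracResidue (p * e) (d * e) = fracResidue p d := by
  rw [fracResidue, mul_mod_mul_right p hd he, coeff_mul_natDegree_sub_one (degree_mod_lt p hd) he,
    leadingCoeff_mul, mul_div_mul_right _ _ (leadingCoeff_ne_zero.2 he), fracResidue]

theorem fracResidue_add (p r d : K[X]) :
    fracResidue (p + r) d = fracResidue p d + fracResidue r d := by
  simp only [fracResidue, add_mod, coeff_add, add_div]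

theorem fracResidue_C_mul (c : K) (p d : K[X]) :
    fracResidue (C c * p) d = c * fracResidue p d := by
  simp only [fracResidue, C_mul_mod, coeff_C_mul, mul_div_assoc]

theorem fracResidue_map (t : K →+* L) (p d : K[X]) :
    fracResidue (p.map t) (d.map t) = t (fracResidue p d) := by
  simp only [fracResidue, ← map_mod, coeff_map, natDegree_map, leadingCoeff_map, map_div₀]

theorem fracResidue_comp_C_mul_X_add_C (p : K[X]) {d : K[X]} (hd : d ≠ 0) {a : K} (ha : a ≠ 0)
    (b : K) : fracResidue (p.comp (C a * X + C b)) (d.comp (C a * X + C b)) =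
      a⁻¹ * fracResidue p d := by
  have hs : (C a * X + C b).natDegree ≠ 0 := by simp [natDegree_linear ha]
  have hlc : (d.comp (C a * X + C b)).leadingCoeff = d.leadingCoeff * a ^ d.natDegree := by
    rw [leadingCoeff_comp hs, leadingCoeff_linear ha]
  rcases eq_or_ne d.natDegree 0 with h0 | h0
  · have hunit : IsUnit d := isUnit_iff_degree_eq_zero.2 (by rw [degree_eq_natDegree hd, h0]; rfl)
    have hmod (r : K[X]) : r % d = 0 := EuclideanDomain.mod_eq_zero.2 hunit.dvd
    simp only [fracResidue, comp_mod_comp p hd hs, hmod, zero_comp, coeff_zero, zero_div, mul_zero]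
  · have hrem : (p % d).natDegree ≤ d.natDegree - 1 := Nat.le_sub_one_of_lt (natDegree_mod_lt p h0)
    have hpow : a ^ d.natDegree = a ^ (d.natDegree - 1) * a := (pow_sub_one_mul h0 a).symm
    have ha' : a ^ (d.natDegree - 1) ≠ 0 := pow_ne_zero _ ha
    rw [fracResidue, comp_mod_comp p hd hs, natDegree_comp_C_mul_X_add_C d ha, hlc,
      coeff_comp_C_mul_X_add_C hrem ha, hpow, fracResidue]
    field_simp

theorem fracResidue_eq_of_div_eq_div {p d r e : K[X]} (hd : d ≠ 0) (he : e ≠ 0)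
    (h : algebraMap K[X] (RatFunc K) p / algebraMap K[X] (RatFunc K) d =
      algebraMap K[X] (RatFunc K) r / algebraMap K[X] (RatFunc K) e) :
    fracResidue p d = fracResidue r e := by
  have hcross : p * e = r * d := by
    apply RatFunc.algebraMap_injective K
    simpa only [map_mul] using
      (div_eq_div_iff (RatFunc.algebraMap_ne_zero hd) (RatFunc.algebraMap_ne_zero he)).1 h
  rw [← fracResidue_mul_mul_right p hd he, hcross, mul_comm d e, fracResidue_mul_mul_right r he hd]

theorem fracResidue_num_denom_eq {f : RatFunc K} {p d : K[X]} (hd : d ≠ 0)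
    (hf : f = algebraMap K[X] (RatFunc K) p / algebraMap K[X] (RatFunc K) d) :
    fracResidue f.num f.denom = fracResidue p d :=
  fracResidue_eq_of_div_eq_div f.denom_ne_zero hd (f.num_div_denom.trans hf)

/-- The sum of the residues of a rational function at its finite poles, as a linear functional on
`K(X)`; it is minus the residue at infinity. -/
def totalResidue : RatFunc K →ₗ[K] K where
  toFun f := fracResidue f.num f.denom
  map_add' f g := by
    have hf := f.denom_ne_zero
    have hg := g.denom_ne_zero
    have hsum : f + g = algebraMap K[X] (RatFunc K) (f.num * g.denom + g.num * f.denom) /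
        algebraMap K[X] (RatFunc K) (f.denom * g.denom) := by
      conv_lhs => rw [← f.num_div_denom, ← g.num_div_denom]
      rw [div_add_div _ _ (RatFunc.algebraMap_ne_zero hf) (RatFunc.algebraMap_ne_zero hg)]
      simp only [map_add, map_mul, mul_comm]
    rw [fracResidue_num_denom_eq (mul_ne_zero hf hg) hsum, fracResidue_add,
      fracResidue_mul_mul_right _ hf hg, mul_comm f.denom, fracResidue_mul_mul_right _ hg hf]
  map_smul' c f := by
    have hsmul : c • f = algebraMap K[X] (RatFunc K) (C c * f.num) /
        algebraMap K[X] (RatFunc K) f.denom := by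
      rw [RatFunc.smul_eq_C_mul, map_mul, RatFunc.algebraMap_C, mul_div_assoc, f.num_div_denom]
    rw [fracResidue_num_denom_eq f.denom_ne_zero hsmul, fracResidue_C_mul, RingHom.id_apply,
      smul_eq_mul]

theorem totalResidue_div (p : K[X]) {d : K[X]} (hd : d ≠ 0) :
    totalResidue (algebraMap K[X] (RatFunc K) p / algebraMap K[X] (RatFunc K) d) =
      fracResidue p d :=
  fracResidue_num_denom_eq hd rfl

theorem totalResidue_inv_X_add_C (a : K) :
    totalResidue (RatFunc.X + RatFunc.C a : RatFunc K)⁻¹ = 1 := by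
  have hfrac : (RatFunc.X + RatFunc.C a : RatFunc K)⁻¹ =
      algebraMap K[X] (RatFunc K) 1 / algebraMap K[X] (RatFunc K) (X + C a) := by simp
  have hmod : (1 : K[X]) % (X + C a) = 1 :=
    (mod_eq_self_iff (X_add_C_ne_zero a)).2 (by simp)
  rw [hfrac, totalResidue_div 1 (X_add_C_ne_zero a), fracResidue, hmod]
  simp

/-- Substituting `a X + b` for `X` rescales the differential `dX` by `a`, whence the factor
`a⁻¹`. -/
theorem totalResidue_map {σ : RatFunc K →+* RatFunc L} {t : K →+* L} {a b : L} (ha : a ≠ 0)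
    (hC : ∀ c, σ (RatFunc.C c) = RatFunc.C (t c))
    (hX : σ RatFunc.X = RatFunc.C a * RatFunc.X + RatFunc.C b) (f : RatFunc K) :
    totalResidue (σ f) = a⁻¹ * t (totalResidue f) := by
  have hcomp : σ.comp (algebraMap K[X] (RatFunc K)) = (algebraMap L[X] (RatFunc L)).comp
      ((compRingHom (C a * X + C b)).comp (mapRingHom t)) := by
    ext <;> simp [hC, hX]
  have hpoly (p : K[X]) : σ (algebraMap K[X] (RatFunc K) p) =
      algebraMap L[X] (RatFunc L) ((p.map t).comp (C a * X + C b)) := RingHom.congr_fun hcomp p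
  have hdenom : f.denom.map t ≠ 0 := (Polynomial.map_ne_zero_iff t.injective).2 f.denom_ne_zero
  have hdenom' : (f.denom.map t).comp (C a * X + C b) ≠ 0 :=
    comp_ne_zero hdenom (by simp [natDegree_linear ha])
  conv_lhs => rw [← f.num_div_denom]
  rw [map_div₀, hpoly, hpoly, totalResidue_div _ hdenom',
    fracResidue_comp_C_mul_X_add_C _ hdenom ha, fracResidue_map,
    ← totalResidue_div _ f.denom_ne_zero, f.num_div_denom]

theorem totalResidue_sub_add_sub {τ σ : RatFunc K →+* RatFunc K} {t : K →+* K}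
    (hτC : ∀ c, τ (RatFunc.C c) = RatFunc.C (t c)) (hτX : τ RatFunc.X = RatFunc.X)
    (hσC : ∀ c, σ (RatFunc.C c) = RatFunc.C c) {b : K}
    (hσX : σ RatFunc.X = RatFunc.X + RatFunc.C b) (g h : RatFunc K) :
    totalResidue ((τ g - g) + (σ h - h)) = t (totalResidue g) - totalResidue g := by
  have hτ : totalResidue (τ g) = t (totalResidue g) := by
    simpa using totalResidue_map (a := 1) (b := 0) one_ne_zero hτC (by simpa using hτX) g
  have hσ : totalResidue (σ h) = totalResidue h := by
    simpa using totalResidue_map (t := RingHom.id K) (a := 1) (b := b) one_ne_zero hσC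
      (by simpa using hσX) h
  rw [map_add, map_sub, map_sub, hτ, hσ, sub_self, add_zero]

end TotalResidue

/-! ### The `q`-shift on `K(x)` -/

section QShift

variable {K : Type*} [Field K] {q : K}

theorem ratFunc_ringHom_ext_s19 {L : Type*} [Field L] {φ ψ : RatFunc K →+* L}
    (hC : ∀ c, φ (RatFunc.C c) = ψ (RatFunc.C c)) (hX : φ RatFunc.X = ψ RatFunc.X) : φ = ψ := by
  have hpoly : φ.comp (algebraMap K[X] (RatFunc K)) = ψ.comp (algebraMap K[X] (RatFunc K)) := by
    ext <;> simp [hC, hX]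
  exact IsFractionRing.ringHom_ext (A := K[X]) (RingHom.congr_fun hpoly)

/-- The automorphism `a(x) ↦ a(qx)` of the field `K(x)`, through which the `q`-shift of `K(x,y)`
acts on coefficients in `K(x)`. -/
def qShift (hq : q ≠ 0) : RatFunc K ≃+* RatFunc K :=
  letI := invertibleOfNonzero hq
  IsFractionRing.ringEquivOfRingEquiv (algEquivCMulXAddC q 0).toRingEquiv

theorem qShift_C (hq : q ≠ 0) (c : K) : qShift hq (RatFunc.C c) = RatFunc.C c := by
  rw [← RatFunc.algebraMap_C, qShift, IsFractionRing.ringEquivOfRingEquiv_algebraMap]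
  simp

theorem qShift_X (hq : q ≠ 0) : qShift hq RatFunc.X = RatFunc.C q * RatFunc.X := by
  rw [← RatFunc.algebraMap_X, qShift, IsFractionRing.ringEquivOfRingEquiv_algebraMap]
  simp

theorem qShift_sub_self_ne_one (hq : q ≠ 0) (a : RatFunc K) : qShift hq a - a ≠ 1 := by
  intro h
  have hres : totalResidue (qShift hq (a / RatFunc.X)) = q⁻¹ * totalResidue (a / RatFunc.X) :=
    totalResidue_map (σ := (qShift hq).toRingHom) (t := RingHom.id K) (b := 0) hq
      (qShift_C hq) (by simp [qShift_X]) _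
  have hshift : qShift hq (a / RatFunc.X) =
      q⁻¹ • (a / RatFunc.X + (RatFunc.X + RatFunc.C 0)⁻¹) := by
    have hX := RatFunc.X_ne_zero (K := K)
    rw [map_div₀, qShift_X, sub_eq_iff_eq_add.1 h, RatFunc.smul_eq_C_mul, map_inv₀, map_zero,
      add_zero]
    field_simp
    ring
  rw [hshift, map_smul, map_add, totalResidue_inv_X_add_C, smul_eq_mul] at hres
  have hcancel := mul_left_cancel₀ (inv_ne_zero hq) hres
  exact one_ne_zero (add_eq_left.1 hcancel)

end QShift

/-! ### Exactness in `K(x,y)` -/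

section Exactness

variable {K : Type*} [Field K] {q : K} {τ σy : F2 K ≃+* F2 K}

theorem IsQShiftX.map_C (hτ : IsQShiftX q τ) (hq : q ≠ 0) (c : RatFunc K) :
    τ (RatFunc.C c) = RatFunc.C (qShift hq c) := by
  have hcomp : τ.toRingHom.comp RatFunc.C = RatFunc.C.comp (qShift hq).toRingHom := by
    apply ratFunc_ringHom_ext_s19
    · intro c
      simpa [qShift_C, Fc] using hτ.1 c
    · simpa [qShift_X, Fc, Fx] using hτ.2.2
  exact RingHom.congr_fun hcomp c

theorem IsShiftY.map_C (hσy : IsShiftY σy) (c : RatFunc K) : σy (RatFunc.C c) = RatFunc.C c := by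
  have hcomp : σy.toRingHom.comp RatFunc.C = RatFunc.C := by
    apply ratFunc_ringHom_ext_s19
    · intro c
      simpa [Fc] using hσy.1 c
    · simpa [Fx] using hσy.2.1
  exact RingHom.congr_fun hcomp c

theorem IsQShiftX.inv_mul_eq (hτ : IsQShiftX q τ) (hq : q ≠ 0) (hq1 : q ≠ 1) :
    (Fx K * Fy K)⁻¹ = τ (Fc K q * ((1 - Fc K q) * Fx K * Fy K)⁻¹) -
      Fc K q * ((1 - Fc K q) * Fx K * Fy K)⁻¹ := by
  obtain ⟨hc, hy, hx⟩ := hτ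
  have hx0 : Fx K ≠ 0 := (_root_.map_ne_zero RatFunc.C).2 RatFunc.X_ne_zero
  have hy0 : Fy K ≠ 0 := RatFunc.X_ne_zero
  have hq0 : Fc K q ≠ 0 := (_root_.map_ne_zero (Fc K)).2 hq
  have hq1' : 1 - Fc K q ≠ 0 := by
    simpa using (_root_.map_ne_zero (Fc K)).2 (sub_ne_zero.2 hq1.symm)
  simp only [map_mul, map_inv₀, map_sub, map_one, hc, hx, hy]
  field_simp

theorem IsQShiftX.inv_add_not_exact (hτ : IsQShiftX q τ) (hσy : IsShiftY σy) (hq : q ≠ 0) :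
    ¬ ∃ g h : F2 K, (Fx K + Fy K)⁻¹ = (τ g - g) + (σy h - h) := by
  rintro ⟨g, h, hexact⟩
  have hσX : σy RatFunc.X = RatFunc.X + RatFunc.C 1 := by simpa [Fy] using hσy.2.2
  have hres : totalResidue (Fx K + Fy K)⁻¹ = qShift hq (totalResidue g) - totalResidue g := by
    rw [hexact]
    exact totalResidue_sub_add_sub (τ := τ.toRingHom) (σ := σy.toRingHom)
      (t := (qShift hq).toRingHom) (hτ.map_C hq) hτ.2.1 hσy.map_C hσX g h
  have hone : totalResidue (Fx K + Fy K)⁻¹ = 1 := by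
    rw [add_comm]
    exact totalResidue_inv_X_add_C RatFunc.X
  exact qShift_sub_self_ne_one hq _ (hres.symm.trans hone)

end Exactness

theorem stmt19_general {K : Type*} [Field K] {q : K} (hq : q ≠ 0) (hq1 : q ≠ 1)
    {τ σy : F2 K ≃+* F2 K} (hτ : IsQShiftX q τ) (hσy : IsShiftY σy) :
    ((Fx K * Fy K)⁻¹ =
        τ (Fc K q * ((1 - Fc K q) * Fx K * Fy K)⁻¹) -
          Fc K q * ((1 - Fc K q) * Fx K * Fy K)⁻¹) ∧
    (∃ g h : F2 K, (Fx K * Fy K)⁻¹ = (τ g - g) + (σy h - h)) ∧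
    ¬ ∃ g h : F2 K, (Fx K + Fy K)⁻¹ = (τ g - g) + (σy h - h) := by
  have hid := hτ.inv_mul_eq hq hq1
  exact ⟨hid, ⟨_, 0, by simpa only [map_zero, sub_self, add_zero] using hid⟩,
    hτ.inv_add_not_exact hσy hq⟩

/-- Example 2: for `q ∈ k \ {0}` with `q ≠ 1`, the identity
`1/(xy) = Δ_{x,q}(q/((1-q)·x·y))` holds in `k(x,y)`; in particular `1/(xy)` is exact with
respect to `(Δ_{x,q}, Δ_y)`. By contrast, if `q` is not a root of unity, then `1/(x+y)`
is not exact with respect to `(Δ_{x,q}, Δ_y)`. -/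
theorem stmt19 {k : Type*} [Field k] [CharZero k]
    (q : k) (hq : q ≠ 0) (hq1 : q ≠ 1)
    (τ : F2 k ≃+* F2 k) (hτ : IsQShiftX q τ)
    (σy : F2 k ≃+* F2 k) (hσy : IsShiftY σy) :
    ((Fx k * Fy k)⁻¹ =
        τ (Fc k q * ((1 - Fc k q) * Fx k * Fy k)⁻¹) -
          Fc k q * ((1 - Fc k q) * Fx k * Fy k)⁻¹) ∧
    (∃ g h : F2 k, (Fx k * Fy k)⁻¹ = (τ g - g) + (σy h - h)) ∧
    (NotRootOfUnity q →
      ¬ ∃ g h : F2 k, (Fx k + Fy k)⁻¹ = (τ g - g) + (σy h - h)) := by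
  obtain ⟨hid, hexact, hnot⟩ := stmt19_general hq hq1 hτ hσy
  exact ⟨hid, hexact, fun _ => hnot⟩
end
end
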